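/- Let X be a uniquely arcwise connected metric space containing no tripod (no three arcs from a common point meeting pairwise only at that point). Then X embeds isometrically onto an interval of ℝ. -/

import Mathlib

open Set

/-- `A` is an arc in `X` connecting `x` with `y`: a subset homeomorphic to
`[0,1]` with endpoints `x` and `y`. -/
def IsArcBetween {X : Type*} [TopologicalSpace X] (A : Set X) (x y : X) : Prop :=
  ∃ h : (Icc (0:ℝ) 1) ≃ₜ A,
    (h ⟨0, by norm_num⟩ : X) = x ∧ (h ⟨1, by norm_num⟩ : X) = y

/-!
In a metric tree any three points `a, b, c` have a median: the point of `[a, b] ∩ [a, c]` farthest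
from `a` also lies on `[b, c]`. If there is no tripod, the median must be one of `a, b, c`, so any
three points are collinear. Fix `o ≠ e` and give `dist o x` a minus sign when `o` lies on `[x, e]`.
By the median property, a point of `[x, y]` lies on `[x, e]` or on `[e, y]`; hence `x` and `y` get
equal signs when `o ∉ [x, y]`, and, there being no tripod, opposite signs when `o ∈ [x, y]`.
Collinearity of `o, x, y` then makes the signed distance an isometry, and its range is connected.
-/

section Arc

variable {X : Type*} [TopologicalSpace X] {A B : Set X} {x y z : X}

theorem path_trans_injective {γ : Path x y} {δ : Path y z} (hγ : Function.Injective γ)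
    (hδ : Function.Injective δ) (h : range γ ∩ range δ ⊆ {y}) :
    Function.Injective (γ.trans δ) := by
  have eq_one_and_eq_zero : ∀ s t, γ s = δ t → s = 1 ∧ t = 0 := fun s t hst ↦ by
    have hy : γ s = y := h ⟨mem_range_self s, hst ▸ mem_range_self t⟩
    exact ⟨hγ (hy.trans γ.target.symm), hδ ((hst.symm.trans hy).trans δ.source.symm)⟩
  intro s t hst
  rw [Path.trans_apply, Path.trans_apply] at hst
  apply Subtype.ext
  split_ifs at hst with hs ht ht
  · have := congrArg Subtype.val (hγ hst)
    simpa using this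
  · have := congrArg Subtype.val (eq_one_and_eq_zero _ _ hst).2
    simp only [Icc.coe_zero] at this
    linarith
  · have := congrArg Subtype.val (eq_one_and_eq_zero _ _ hst.symm).2
    simp only [Icc.coe_zero] at this
    linarith
  · have := congrArg Subtype.val (hδ hst)
    simpa using this

theorem isArcBetween_range [T2Space X] {γ : Path x y} (hγ : Function.Injective γ) :
    IsArcBetween (range γ) x y :=
  ⟨(γ.continuous.isClosedEmbedding hγ).isEmbedding.toHomeomorph, γ.source, γ.target⟩

namespace IsArcBetween

theorem exists_path (h : IsArcBetween A x y) :
    ∃ γ : Path x y, Function.Injective γ ∧ range γ = A := by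
  obtain ⟨φ, h₀, h₁⟩ := h
  refine ⟨⟨⟨fun t ↦ φ t, by fun_prop⟩, h₀, h₁⟩, Subtype.val_injective.comp φ.injective, ?_⟩
  exact (φ.surjective.range_comp Subtype.val).trans Subtype.range_coe

theorem left_mem (h : IsArcBetween A x y) : x ∈ A := by
  obtain ⟨γ, -, rfl⟩ := h.exists_path
  exact ⟨0, γ.source⟩

theorem right_mem (h : IsArcBetween A x y) : y ∈ A := by
  obtain ⟨γ, -, rfl⟩ := h.exists_path
  exact ⟨1, γ.target⟩

theorem isCompact (h : IsArcBetween A x y) : IsCompact A := by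
  obtain ⟨γ, -, rfl⟩ := h.exists_path
  exact isCompact_range γ.continuous

theorem union [T2Space X] (hA : IsArcBetween A x y) (hB : IsArcBetween B y z)
    (hAB : A ∩ B ⊆ {y}) : IsArcBetween (A ∪ B) x z := by
  obtain ⟨γ, hγ, rfl⟩ := hA.exists_path
  obtain ⟨δ, hδ, rfl⟩ := hB.exists_path
  rw [← Path.trans_range]
  exact isArcBetween_range (path_trans_injective hγ hδ hAB)

end IsArcBetween

end Arc

/-- The segment `[x, y]` of a metric space: the points at which the triangle inequality for `x` and
`y` is an equality. In a metric tree this is the arc joining `x` and `y`. -/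
def metricSegment {X : Type*} [PseudoMetricSpace X] (x y : X) : Set X :=
  {z | dist x z + dist z y = dist x y}

section MetricSegment

section PseudoMetricSpace

variable {X : Type*} [PseudoMetricSpace X] {w x y z : X}

theorem mem_metricSegment : z ∈ metricSegment x y ↔ dist x z + dist z y = dist x y :=
  Iff.rfl

theorem left_mem_metricSegment (x y : X) : x ∈ metricSegment x y := by
  simp [mem_metricSegment]

theorem right_mem_metricSegment (x y : X) : y ∈ metricSegment x y := by
  simp [mem_metricSegment]

theorem metricSegment_comm (x y : X) : metricSegment x y = metricSegment y x := by
  ext z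
  simp only [mem_metricSegment, dist_comm, add_comm]

theorem singleton_subset_metricSegment_inter (x y z : X) :
    {x} ⊆ metricSegment x y ∩ metricSegment x z :=
  singleton_subset_iff.2 ⟨left_mem_metricSegment x y, left_mem_metricSegment x z⟩

theorem isClosed_metricSegment (x y : X) : IsClosed (metricSegment x y) :=
  isClosed_eq (by fun_prop) (by fun_prop)

theorem metricSegment_subset_left (hy : y ∈ metricSegment w z) :
    metricSegment w y ⊆ metricSegment w z := by
  intro x hx
  rw [mem_metricSegment] at *
  linarith [dist_triangle x y z, dist_triangle w x z]

theorem metricSegment_subset_right (hx : x ∈ metricSegment w z) :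
    metricSegment x z ⊆ metricSegment w z := by
  rw [metricSegment_comm x, metricSegment_comm w] at *
  exact metricSegment_subset_left hx

theorem mem_metricSegment_of_mem_right (hx : x ∈ metricSegment w z) (hy : y ∈ metricSegment x z) :
    x ∈ metricSegment w y := by
  have hy' := metricSegment_subset_right hx hy
  rw [mem_metricSegment] at *
  linarith

end PseudoMetricSpace

variable {X : Type*} [MetricSpace X] {m a b : X}

theorem metricSegment_self (a : X) : metricSegment a a = {a} := by
  ext z
  simp [mem_metricSegment, dist_comm a z, ← two_mul]

theorem ne_of_mem_metricSegment (h : m ∈ metricSegment a b) (hm : m ≠ a) : a ≠ b := by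
  rintro rfl
  rw [metricSegment_self] at h
  exact hm h

theorem metricSegment_inter_eq_singleton (h : m ∈ metricSegment a b) :
    metricSegment m a ∩ metricSegment m b = {m} := by
  refine Subset.antisymm (fun p ⟨hpa, hpb⟩ ↦ ?_)
    (singleton_subset_metricSegment_inter m a b)
  rw [mem_metricSegment] at h hpa hpb
  have hmp : dist m p ≤ 0 := by
    linarith [dist_triangle a p b, dist_comm a p, dist_comm a m, dist_nonneg (x := m) (y := p)]
  exact (dist_le_zero.1 hmp).symm

end MetricSegment

/-- A metric tree: a uniquely arcwise connected metric space all of whose arcs are geodesic. -/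
structure IsMetricTree (X : Type*) [MetricSpace X] : Prop where
  existsUnique_isArcBetween : ∀ x y : X, x ≠ y → ∃! A : Set X, IsArcBetween A x y
  dist_add_dist_of_mem : ∀ (x y : X) (A : Set X), IsArcBetween A x y →
    ∀ z ∈ A, dist x z + dist z y = dist x y

/-- Absence of tripods in metric form: no point lies between each two of three points different
from it. In a metric tree the segments from such a point would form a tripod, by
`metricSegment_inter_eq_singleton`. -/
def TripodFree (X : Type*) [PseudoMetricSpace X] : Prop :=
  ∀ m a b c : X, m ∈ metricSegment a b → m ∈ metricSegment a c → m ∈ metricSegment b c →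
    m = a ∨ m = b ∨ m = c

/-- The distance from `o` to `x`, with a minus sign if `o` lies between `x` and `e`. In a
tripod-free metric tree and for `e ≠ o`, this is the coordinate with origin `o` for which `e` is on
the positive side. -/
noncomputable def orientedDist {X : Type*} [PseudoMetricSpace X] (o e x : X) : ℝ :=
  open Classical in if o ∈ metricSegment x e then -dist o x else dist o x

section OrientedDist

variable {X : Type*} [PseudoMetricSpace X] {o e x : X}

theorem orientedDist_of_mem (h : o ∈ metricSegment x e) : orientedDist o e x = -dist o x :=
  if_pos h

theorem orientedDist_of_notMem (h : o ∉ metricSegment x e) : orientedDist o e x = dist o x :=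
  if_neg h

end OrientedDist

namespace IsMetricTree

variable {X : Type*} [MetricSpace X] {A : Set X} {m o e a b x y : X}

theorem subset_metricSegment (hX : IsMetricTree X) (hA : IsArcBetween A x y) :
    A ⊆ metricSegment x y :=
  hX.dist_add_dist_of_mem x y A hA

theorem isArcBetween_metricSegment (hX : IsMetricTree X) (hxy : x ≠ y) :
    IsArcBetween (metricSegment x y) x y := by
  obtain ⟨A, hA, hA_unique⟩ := hX.existsUnique_isArcBetween x y hxy
  suffices metricSegment x y ⊆ A from (hX.subset_metricSegment hA).antisymm this ▸ hA
  intro z hz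
  rcases eq_or_ne x z with rfl | hxz
  · exact hA.left_mem
  rcases eq_or_ne z y with rfl | hzy
  · exact hA.right_mem
  obtain ⟨B, hB, -⟩ := hX.existsUnique_isArcBetween x z hxz
  obtain ⟨C, hC, -⟩ := hX.existsUnique_isArcBetween z y hzy
  have hBC : B ∩ C ⊆ {z} := by
    rw [← metricSegment_inter_eq_singleton hz, metricSegment_comm z x]
    exact inter_subset_inter (hX.subset_metricSegment hB) (hX.subset_metricSegment hC)
  exact hA_unique _ (hB.union hC hBC) ▸ Or.inl hB.right_mem

theorem isCompact_metricSegment (hX : IsMetricTree X) (x y : X) :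
    IsCompact (metricSegment x y) := by
  rcases eq_or_ne x y with rfl | hxy
  · rw [metricSegment_self]
    exact isCompact_singleton
  · exact (hX.isArcBetween_metricSegment hxy).isCompact

theorem pathConnectedSpace [Nonempty X] (hX : IsMetricTree X) : PathConnectedSpace X where
  nonempty := ‹_›
  joined x y := by
    rcases eq_or_ne x y with rfl | hxy
    · exact Joined.refl x
    · obtain ⟨γ, -⟩ := (hX.isArcBetween_metricSegment hxy).exists_path
      exact ⟨γ⟩

theorem isArcBetween_union_metricSegment (hX : IsMetricTree X) (ha : m ≠ a) (hb : m ≠ b)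
    (h : metricSegment m a ∩ metricSegment m b = {m}) :
    IsArcBetween (metricSegment m a ∪ metricSegment m b) a b := by
  rw [metricSegment_comm m a] at *
  exact (hX.isArcBetween_metricSegment ha.symm).union (hX.isArcBetween_metricSegment hb) h.subset

theorem mem_metricSegment_of_inter_eq_singleton (hX : IsMetricTree X)
    (h : metricSegment m a ∩ metricSegment m b = {m}) : m ∈ metricSegment a b := by
  rcases eq_or_ne m a with rfl | ha
  · exact left_mem_metricSegment m b
  rcases eq_or_ne m b with rfl | hb
  · exact right_mem_metricSegment a m
  exact hX.subset_metricSegment (hX.isArcBetween_union_metricSegment ha hb h)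
    (Or.inl (left_mem_metricSegment m a))

theorem metricSegment_subset_union (hX : IsMetricTree X) (h : m ∈ metricSegment a b) :
    metricSegment a b ⊆ metricSegment a m ∪ metricSegment m b := by
  rcases eq_or_ne m a with rfl | ha
  · exact subset_union_right
  rcases eq_or_ne m b with rfl | hb
  · exact subset_union_left
  have hab : a ≠ b := ne_of_mem_metricSegment h ha
  rw [metricSegment_comm a m]
  exact ((hX.existsUnique_isArcBetween a b hab).unique (hX.isArcBetween_metricSegment hab)
    (hX.isArcBetween_union_metricSegment ha hb (metricSegment_inter_eq_singleton h))).subset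

theorem exists_median (hX : IsMetricTree X) (a b c : X) :
    ∃ m, m ∈ metricSegment a b ∧ m ∈ metricSegment a c ∧ m ∈ metricSegment b c := by
  obtain ⟨m, ⟨hmb, hmc⟩, hmax⟩ :=
    ((hX.isCompact_metricSegment a b).inter_right (isClosed_metricSegment a c)).exists_isMaxOn
      ⟨a, left_mem_metricSegment a b, left_mem_metricSegment a c⟩
      (f := dist a) (by fun_prop)
  refine ⟨m, hmb, hmc, hX.mem_metricSegment_of_inter_eq_singleton ?_⟩
  refine Subset.antisymm (fun p ⟨hpb, hpc⟩ ↦ ?_)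
    (singleton_subset_metricSegment_inter m b c)
  have hle : dist a p ≤ dist a m :=
    hmax ⟨metricSegment_subset_right hmb hpb, metricSegment_subset_right hmc hpc⟩
  have hadd : dist a m + dist m p = dist a p := mem_metricSegment_of_mem_right hmb hpb
  exact (dist_le_zero.1 (by linarith)).symm

theorem mem_metricSegment_or_mem_metricSegment (hX : IsMetricTree X) (h : o ∈ metricSegment x y)
    (e : X) : o ∈ metricSegment x e ∨ o ∈ metricSegment y e := by
  obtain ⟨m, hxy, hxe, hye⟩ := hX.exists_median x y e
  refine (hX.metricSegment_subset_union hxy h).imp (fun ho ↦ metricSegment_subset_left hxe ho)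
    (fun ho ↦ ?_)
  rw [metricSegment_comm m y] at ho
  exact metricSegment_subset_left hye ho

theorem mem_metricSegment_iff_of_notMem (hX : IsMetricTree X) (h : o ∉ metricSegment x y)
    (e : X) : o ∈ metricSegment x e ↔ o ∈ metricSegment y e := by
  refine ⟨fun hx ↦ ?_, fun hy ↦ ?_⟩
  · exact metricSegment_comm e y ▸ (hX.mem_metricSegment_or_mem_metricSegment hx y).resolve_left h
  · rw [metricSegment_comm x y] at h
    exact metricSegment_comm e x ▸ (hX.mem_metricSegment_or_mem_metricSegment hy x).resolve_left h

theorem collinear_of_tripodFree (hX : IsMetricTree X) (hfree : TripodFree X) (a b c : X) :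
    a ∈ metricSegment b c ∨ b ∈ metricSegment a c ∨ c ∈ metricSegment a b := by
  obtain ⟨m, hab, hac, hbc⟩ := hX.exists_median a b c
  rcases hfree m a b c hab hac hbc with rfl | rfl | rfl
  · exact Or.inl hbc
  · exact Or.inr (Or.inl hac)
  · exact Or.inr (Or.inr hab)

theorem dist_eq_abs_sub_of_notMem (hX : IsMetricTree X) (hfree : TripodFree X)
    (h : o ∉ metricSegment x y) : dist x y = |dist o x - dist o y| := by
  rcases hX.collinear_of_tripodFree hfree o x y with ho | hx | hy
  · exact absurd ho h
  · rw [← mem_metricSegment.1 hx, sub_add_cancel_left, abs_neg, abs_of_nonneg dist_nonneg]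
  · rw [← mem_metricSegment.1 hy, add_sub_cancel_left, abs_of_nonneg dist_nonneg, dist_comm]

theorem dist_orientedDist_of_mem (hX : IsMetricTree X) (hfree : TripodFree X) (hoe : o ≠ e)
    (h : o ∈ metricSegment x y) : dist (orientedDist o e x) (orientedDist o e y) = dist x y := by
  have hadd : dist x y = dist o x + dist o y := by
    rw [← mem_metricSegment.1 h, dist_comm x o]
  have hnonneg : 0 ≤ dist o x + dist o y := add_nonneg dist_nonneg dist_nonneg
  rw [Real.dist_eq]
  by_cases hx : o ∈ metricSegment x e <;> by_cases hy : o ∈ metricSegment y e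
  · rw [orientedDist_of_mem hx, orientedDist_of_mem hy]
    rcases hfree o x y e h hx hy with rfl | rfl | rfl
    · simp
    · simp [dist_comm]
    · exact absurd rfl hoe
  · rw [orientedDist_of_mem hx, orientedDist_of_notMem hy, hadd, ← neg_add', abs_neg,
      abs_of_nonneg hnonneg]
  · rw [orientedDist_of_notMem hx, orientedDist_of_mem hy, hadd, sub_neg_eq_add,
      abs_of_nonneg hnonneg]
  · exact ((hX.mem_metricSegment_or_mem_metricSegment h e).elim hx hy).elim

theorem dist_orientedDist_of_notMem (hX : IsMetricTree X) (hfree : TripodFree X)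
    (h : o ∉ metricSegment x y) (e : X) :
    dist (orientedDist o e x) (orientedDist o e y) = dist x y := by
  have hiff := hX.mem_metricSegment_iff_of_notMem h e
  rw [hX.dist_eq_abs_sub_of_notMem hfree h, ← Real.dist_eq]
  by_cases hx : o ∈ metricSegment x e
  · rw [orientedDist_of_mem hx, orientedDist_of_mem (hiff.1 hx), dist_neg_neg]
  · rw [orientedDist_of_notMem hx, orientedDist_of_notMem (mt hiff.2 hx)]

theorem isometry_orientedDist (hX : IsMetricTree X) (hfree : TripodFree X) (hoe : o ≠ e) :
    Isometry (orientedDist o e) :=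
  Isometry.of_dist_eq fun x y ↦ by
    by_cases h : o ∈ metricSegment x y
    · exact hX.dist_orientedDist_of_mem hfree hoe h
    · exact hX.dist_orientedDist_of_notMem hfree h e

theorem exists_isometry_real (hX : IsMetricTree X) (hfree : TripodFree X) :
    ∃ f : X → ℝ, Isometry f := by
  rcases subsingleton_or_nontrivial X with _ | _
  · exact ⟨fun _ ↦ 0, isometry_subsingleton⟩
  · obtain ⟨o, e, hoe⟩ := exists_pair_ne X
    exact ⟨orientedDist o e, hX.isometry_orientedDist hfree hoe⟩

end IsMetricTree

/-- Let `X` be a uniquely arcwise connected metric space in which every arc is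
a geodesic segment (a metric tree), containing no tripod. Then `X` embeds
isometrically onto an interval of `ℝ`. -/
theorem stmt19 {X : Type*} [MetricSpace X] [Nonempty X]
    (huniq : ∀ x y : X, x ≠ y → ∃! A : Set X, IsArcBetween A x y)
    (hgeo : ∀ (x y : X) (A : Set X), IsArcBetween A x y →
      ∀ z ∈ A, dist x z + dist z y = dist x y)
    (hnotripod : ¬ ∃ (x x₁ x₂ x₃ : X) (A₁ A₂ A₃ : Set X),
      x ≠ x₁ ∧ x ≠ x₂ ∧ x ≠ x₃ ∧ x₁ ≠ x₂ ∧ x₁ ≠ x₃ ∧ x₂ ≠ x₃ ∧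
      IsArcBetween A₁ x x₁ ∧ IsArcBetween A₂ x x₂ ∧ IsArcBetween A₃ x x₃ ∧
      A₁ ∩ A₂ = {x} ∧ A₁ ∩ A₃ = {x} ∧ A₂ ∩ A₃ = {x}) :
    ∃ f : X → ℝ, Isometry f ∧ (Set.range f).OrdConnected := by
  have hX : IsMetricTree X := ⟨huniq, hgeo⟩
  have hfree : TripodFree X := by
    intro m a b c hab hac hbc
    by_contra! ⟨ha, hb, hc⟩
    exact hnotripod ⟨m, a, b, c, metricSegment m a, metricSegment m b, metricSegment m c,
      ha, hb, hc, ne_of_mem_metricSegment hab ha, ne_of_mem_metricSegment hac ha,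
      ne_of_mem_metricSegment hbc hb, hX.isArcBetween_metricSegment ha,
      hX.isArcBetween_metricSegment hb, hX.isArcBetween_metricSegment hc,
      metricSegment_inter_eq_singleton hab, metricSegment_inter_eq_singleton hac,
      metricSegment_inter_eq_singleton hbc⟩
  obtain ⟨f, hf⟩ := hX.exists_isometry_real hfree
  have := hX.pathConnectedSpace
  exact ⟨f, hf, (isPreconnected_range hf.continuous).ordConnected⟩
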